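/- Let G be the n-path graph with n ≥ 3 and d = 3, and let x = ∏_{i=2}^{n−1} y_{i k̂_i} ∈ R_G(3), where k̂_i = 3 if i is even and k̂_i = 2 if i is odd. Then the set of minimal primes of the principal ideal (x) ⊆ R_G(3) is exactly {P_2, …, P_{n−1}, Q_2, …, Q_{n−1}} (images of the corresponding ideals of S in R_G(3)). -/

import Mathlib

open MvPolynomial

/-- The variable `y_{i c}` of the polynomial ring `K[y_{ij} : i ∈ [n], j ∈ [3]]`,
with indices `i ∈ {1, …, n}` and `c ∈ {1, 2, 3}` as in the paper
(and junk value `0` for out-of-range indices). -/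
noncomputable def yvar (K : Type) [Field K] (n i c : ℕ) : MvPolynomial (Fin n × Fin 3) K :=
  if h : 1 ≤ i ∧ i ≤ n ∧ 1 ≤ c ∧ c ≤ 3 then
    MvPolynomial.X (⟨i - 1, by omega⟩, ⟨c - 1, by omega⟩)
  else 0

/-- The LSS generator `f_{a(a+1)} = ∑_{k=1}^3 y_{ak} y_{(a+1)k}` associated to the edge
`{a, a+1}` of the `n`-path graph. -/
noncomputable def pathGen (K : Type) [Field K] (n a : ℕ) : MvPolynomial (Fin n × Fin 3) K :=
  ∑ k : Fin 3, yvar K n a (k.1 + 1) * yvar K n (a + 1) (k.1 + 1)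

/-- The LSS ideal `L_G(3) = (f_{12}, …, f_{(n-1)n})` of the `n`-path graph `G`. -/
noncomputable def pathLSS (K : Type) [Field K] (n : ℕ) :
    Ideal (MvPolynomial (Fin n × Fin 3) K) :=
  Ideal.span {g | ∃ a : ℕ, 1 ≤ a ∧ a + 1 ≤ n ∧ g = pathGen K n a}

/-- The ideal generated by the list `F_i` of all generators of `pathLSS` except
`f_{(i-1)i}` and `f_{i(i+1)}`. -/
noncomputable def exceptIdeal (K : Type) [Field K] (n i : ℕ) :
    Ideal (MvPolynomial (Fin n × Fin 3) K) :=
  Ideal.span {g | ∃ a : ℕ, 1 ≤ a ∧ a + 1 ≤ n ∧ a ≠ i - 1 ∧ a ≠ i ∧ g = pathGen K n a}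

/-- The column index `k`: `2` if `i` is even, `3` if `i` is odd. -/
def kcol (i : ℕ) : ℕ := if Even i then 2 else 3

/-- The column index `k̂ = 5 - k`: `3` if `i` is even, `2` if `i` is odd. -/
def khat (i : ℕ) : ℕ := if Even i then 3 else 2

/-- The ideal `P_i = (y_{i1}, y_{i2}, y_{i3}) + (F_i)` of `S`. -/
noncomputable def Pideal (K : Type) [Field K] (n i : ℕ) :
    Ideal (MvPolynomial (Fin n × Fin 3) K) :=
  Ideal.span {yvar K n i 1, yvar K n i 2, yvar K n i 3} ⊔ exceptIdeal K n i

/-- The ideal `Q_i = I_1(Y_i y_i) + (det Y_i, y_{i k̂}) + (F_i)` of `S`, where `Y_i` is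
the `2 × 2` matrix with rows `(y_{(i-1)1}, y_{(i-1)k})`, `(y_{(i+1)1}, y_{(i+1)k})` and
`y_i` is the column vector `(y_{i1}, y_{ik})`. -/
noncomputable def Qideal (K : Type) [Field K] (n i : ℕ) :
    Ideal (MvPolynomial (Fin n × Fin 3) K) :=
  Ideal.span
      {yvar K n (i - 1) 1 * yvar K n i 1 + yvar K n (i - 1) (kcol i) * yvar K n i (kcol i),
       yvar K n (i + 1) 1 * yvar K n i 1 + yvar K n (i + 1) (kcol i) * yvar K n i (kcol i),
       yvar K n (i - 1) 1 * yvar K n (i + 1) (kcol i) -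
         yvar K n (i - 1) (kcol i) * yvar K n (i + 1) 1,
       yvar K n i (khat i)} ⊔ exceptIdeal K n i

/-- The element `x = ∏_{i=2}^{n-1} y_{i k̂ᵢ}` of `S`. -/
noncomputable def pathProd (K : Type) [Field K] (n : ℕ) : MvPolynomial (Fin n × Fin 3) K :=
  ∏ i ∈ Finset.Icc 2 (n - 1), yvar K n i (khat i)

/-!
Each `P_i` and `Q_i` is an ideal supported near the vertex `i` together with the edge forms of the
two paths leading away from `i`. Attaching such a path vertex by vertex adjoins, at every step, an
equation `a y + b` in a fresh variable `y`; if `(G)` and `(G, a)` are prime, `a ∉ (G)` and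
`b ∉ (G, a)`, then `(G, a y + b)` is prime, being the kernel of `y ↦ -b / a`. Three columns
suffice: one contains `y`, one keeps `b` out of `(G, a)`, and one supplies the coefficient `a` of
the next step.

A prime containing `x` and `L_G(3)` contains some `y_{i k̂}`, hence both entries of `Y_i y_i`. By
Cramer's rule it contains either `det Y_i` or the whole vector `y_i`, that is, `Q_i` or `P_i`.
Evaluation at 0-1 points shows that these primes are pairwise incomparable.
-/

section SpanPrimality

variable {τ R : Type*} [CommRing R]

theorem notMem_span_of_map {S T : Type*} [CommSemiring S] [CommSemiring T] (φ : S →+* T) {G : Set S}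
    {p : S} (hG : ∀ g ∈ G, φ g = 0) (hp : φ p ≠ 0) : p ∉ Ideal.span G := fun h =>
  hp ((Ideal.span_le (I := RingHom.ker φ)).2 hG h)

theorem eval_indicator_one_X (s : Set τ) [DecidablePred (· ∈ s)] (t : τ) :
    eval (s.indicator 1) (X t : MvPolynomial τ R) = if t ∈ s then 1 else 0 := by
  rw [eval_X, Set.indicator_apply, Pi.one_apply]

theorem mem_of_pow_mul_mem {S : Type*} [CommSemiring S] {J : Ideal S} {a f : S}
    (hsat : ∀ g, a * g ∈ J → g ∈ J) {N : ℕ} (h : a ^ N * f ∈ J) : f ∈ J := by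
  induction N with
  | zero => rwa [pow_zero, one_mul] at h
  | succ N ih => exact ih (hsat _ (by rwa [pow_succ', mul_assoc] at h))

theorem exists_pow_mul_sub_mem_span_linear {t : τ} {a b : MvPolynomial τ R}
    (ha : a ∈ supported R {t}ᶜ) (hb : b ∈ supported R {t}ᶜ) (f : MvPolynomial τ R) :
    ∃ N, ∃ c ∈ supported R {t}ᶜ, a ^ N * f - c ∈ Ideal.span {a * X t + b} := by
  simp only [Ideal.mem_span_singleton']
  induction f using MvPolynomial.induction_on with
  | C r => exact ⟨0, C r, Subalgebra.algebraMap_mem _ r, 0, by ring⟩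
  | add f g hf hg =>
    obtain ⟨M, c, hc, h, hh⟩ := hf
    obtain ⟨N, d, hd, k, hk⟩ := hg
    refine ⟨M + N, a ^ N * c + a ^ M * d, add_mem (mul_mem (pow_mem ha _) hc)
      (mul_mem (pow_mem ha _) hd), a ^ N * h + a ^ M * k, ?_⟩
    linear_combination a ^ N * hh + a ^ M * hk
  | mul_X f s hf =>
    obtain ⟨N, c, hc, h, hh⟩ := hf
    by_cases hs : s = t
    · subst hs
      refine ⟨N + 1, -(b * c), neg_mem (mul_mem hb hc), a * X s * h + c, ?_⟩
      linear_combination a * X s * hh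
    · refine ⟨N, c * X s, mul_mem hc (Algebra.subset_adjoin ⟨s, hs, rfl⟩), h * X s, ?_⟩
      linear_combination X s * hh

variable {t : τ} {a b : MvPolynomial τ R} {G : Set (MvPolynomial τ R)}
  {J : Ideal (MvPolynomial τ R)}

-- `J` is the kernel of the substitution `X t ↦ -b / a` into the fraction field of `R[τ] ⧸ (G)`.
theorem isPrime_of_linear_saturated (hG : G ⊆ supported R {t}ᶜ) (hprime : (Ideal.span G).IsPrime)
    (ha : a ∈ supported R {t}ᶜ) (hb : b ∈ supported R {t}ᶜ) (haG : a ∉ Ideal.span G)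
    (hGJ : Ideal.span (insert (a * X t + b) G) ≤ J)
    (hJ : ∀ j ∈ J, a * j ∈ Ideal.span (insert (a * X t + b) G))
    (hsat : ∀ f, a * f ∈ J → f ∈ J) : J.IsPrime := by
  classical
  let F := FractionRing (MvPolynomial τ R ⧸ Ideal.span G)
  let ι : MvPolynomial τ R →ₐ[R] F :=
    (IsScalarTower.toAlgHom R (MvPolynomial τ R ⧸ Ideal.span G) F).comp
      (Ideal.Quotient.mkₐ R (Ideal.span G))
  let ev : MvPolynomial τ R →ₐ[R] F := aeval (Function.update (fun s => ι (X s)) t (-ι b / ι a))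
  have ι_eq_zero {c} : ι c = 0 ↔ c ∈ Ideal.span G :=
    (FaithfulSMul.algebraMap_eq_zero_iff (MvPolynomial τ R ⧸ Ideal.span G) F).trans
      Ideal.Quotient.eq_zero_iff_mem
  have ev_eq_ι {c} (hc : c ∈ supported R {t}ᶜ) : ev c = ι c := by
    refine AlgHom.eqOn_adjoin_iff.2 ?_ hc
    rintro _ ⟨s, hs, rfl⟩
    exact (aeval_X _ s).trans (Function.update_of_ne hs _ _)
  have hιa : ι a ≠ 0 := fun h => haG (ι_eq_zero.1 h)
  have ev_linear : ev (a * X t + b) = 0 := by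
    have hXt : ev (X t) = -ι b / ι a := (aeval_X _ t).trans (Function.update_self _ _ _)
    rw [map_add, map_mul, hXt, ev_eq_ι ha, ev_eq_ι hb, mul_div_cancel₀ _ hιa,
      neg_add_cancel]
  have le_ker : Ideal.span (insert (a * X t + b) G) ≤ RingHom.ker ev :=
    Ideal.span_le.2 <| Set.insert_subset ev_linear fun g hg =>
      (ev_eq_ι (hG hg)).trans (ι_eq_zero.2 (Ideal.subset_span hg))
  suffices J = RingHom.ker ev from this ▸ RingHom.ker_isPrime ev
  refine le_antisymm (fun j hj => ?_) fun f hf => ?_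
  · have h : ev (a * j) = 0 := le_ker (hJ j hj)
    rw [map_mul, ev_eq_ι ha] at h
    exact (mul_eq_zero.1 h).resolve_left hιa
  · obtain ⟨N, c, hc, hNc⟩ := exists_pow_mul_sub_mem_span_linear ha hb f
    replace hNc := Ideal.span_mono (Set.singleton_subset_iff.2 (Set.mem_insert _ G)) hNc
    have hcG : c ∈ Ideal.span G := ι_eq_zero.1 <| by
      have h : ev (a ^ N * f - c) = 0 := le_ker hNc
      rwa [map_sub, map_mul, RingHom.mem_ker.1 hf, mul_zero, zero_sub, neg_eq_zero,
        ev_eq_ι hc] at h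
    have hNf : a ^ N * f ∈ J := by
      have h := add_mem (hGJ hNc) (hGJ (Ideal.span_mono (Set.subset_insert _ G) hcG))
      rwa [sub_add_cancel] at h
    exact mem_of_pow_mul_mem hsat hNf

theorem isPrime_span_insert_linear (hG : G ⊆ supported R {t}ᶜ) (hprime : (Ideal.span G).IsPrime)
    (haprime : (Ideal.span (insert a G)).IsPrime)
    (ha : a ∈ supported R {t}ᶜ) (hb : b ∈ supported R {t}ᶜ) (haG : a ∉ Ideal.span G)
    (hbG : b ∉ Ideal.span (insert a G)) : (Ideal.span (insert (a * X t + b) G)).IsPrime := by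
  refine isPrime_of_linear_saturated hG hprime ha hb haG le_rfl
    (fun j hj => Ideal.mul_mem_left _ _ hj) fun f hf => ?_
  obtain ⟨h, i, hi, hf⟩ := Ideal.mem_span_insert.1 hf
  have hh : h ∈ Ideal.span (insert a G) := by
    refine (haprime.mem_or_mem ?_).resolve_left hbG
    exact Ideal.mem_span_insert.2 ⟨f - X t * h, -i, neg_mem hi, by linear_combination -hf⟩
  obtain ⟨k, j, hj, rfl⟩ := Ideal.mem_span_insert.1 hh
  have hfk : f - k * (a * X t + b) ∈ Ideal.span G := by
    refine (hprime.mem_or_mem ?_).resolve_left haG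
    have h : a * (f - k * (a * X t + b)) = (a * X t + b) * j + i := by linear_combination hf
    exact h ▸ add_mem (Ideal.mul_mem_left _ _ hj) hi
  exact Ideal.mem_span_insert.2 ⟨k, _, hfk, by ring⟩

theorem isPrime_span_insert_X (hG : G ⊆ supported R {t}ᶜ) (hprime : (Ideal.span G).IsPrime) :
    (Ideal.span (insert (X t) G)).IsPrime := by
  have hX : (1 : MvPolynomial τ R) * X t + 0 = X t := by ring
  refine isPrime_of_linear_saturated (a := 1) (b := 0) hG hprime (one_mem _) (zero_mem _)
    ((Ideal.ne_top_iff_one _).1 hprime.ne_top) (by rw [hX]) (fun j hj => ?_) fun f hf => ?_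
  · rwa [hX, one_mul]
  · rwa [one_mul] at hf

theorem isPrime_span_X_image [IsDomain R] (s : Finset τ) :
    (Ideal.span (X '' (s : Set τ) : Set (MvPolynomial τ R))).IsPrime := by
  classical
  induction s using Finset.induction_on with
  | empty => simpa only [Finset.coe_empty, Set.image_empty, Ideal.span_empty] using
      Ideal.isPrime_bot
  | insert t s ht ih =>
    rw [Finset.coe_insert, Set.image_insert_eq]
    refine isPrime_span_insert_X ?_ ih
    rintro _ ⟨r, hr, rfl⟩
    exact Algebra.subset_adjoin ⟨r, fun h => ht (h ▸ hr), rfl⟩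

end SpanPrimality

section VanishingProduct

variable {τ R : Type*} [CommRing R] [IsDomain R] {u u' w w' p q : τ}

-- With `D = u w' - u' w`, the cofactor identities `u (w p + w' q) = w (u p + u' q) + q D` and
-- `u' (w p + w' q) = w' (u p + u' q) - p D` eliminate one quadric at a time.
theorem mem_span_mulVec_det_of_mul_mem {S : Type*} [CommRing S] {u u' w w' p q f : S}
    (huu' : (Ideal.span {u, u'}).IsPrime) (huw : (Ideal.span {u, w}).IsPrime)
    (hdet : (Ideal.span {u * w' - u' * w}).IsPrime)
    (hw_notMem : w * p + w' * q ∉ Ideal.span {u, u'}) (hu'_notMem : u' * q ∉ Ideal.span {u, w})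
    (hu_notMem : u ∉ Ideal.span {u * w' - u' * w})
    (hf : u * f ∈ Ideal.span {w * p + w' * q, u * p + u' * q, u * w' - u' * w}) :
    f ∈ Ideal.span {w * p + w' * q, u * p + u' * q, u * w' - u' * w} := by
  obtain ⟨k, h, l, hf⟩ := Submodule.mem_span_triple.1 hf
  simp only [smul_eq_mul] at hf
  have hk : k ∈ Ideal.span {u, u'} :=
    (huu'.mem_or_mem (Ideal.mem_span_pair.2 ⟨f - p * h - w' * l, -q * h + w * l,
      by linear_combination -hf⟩)).resolve_right hw_notMem
  obtain ⟨k₁, k₂, rfl⟩ := Ideal.mem_span_pair.1 hk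
  set h' := h + k₁ * w + k₂ * w' with hh'
  set l' := l + k₁ * q - k₂ * p with hl'
  replace hf : u * f = h' * (u * p + u' * q) + l' * (u * w' - u' * w) := by
    linear_combination -hf + (u * p + u' * q) * hh' + (u * w' - u' * w) * hl'
  have hh : h' ∈ Ideal.span {u, w} :=
    (huw.mem_or_mem (Ideal.mem_span_pair.2 ⟨f - h' * p - l' * w', l' * u',
      by linear_combination hf⟩)).resolve_right hu'_notMem
  obtain ⟨h₁, h₂, hh⟩ := Ideal.mem_span_pair.1 hh
  have hdiff : f - h₁ * (u * p + u' * q) - h₂ * (w * p + w' * q) ∈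
      Ideal.span {u * w' - u' * w} :=
    (hdet.mem_or_mem (Ideal.mem_span_singleton'.2 ⟨l' - h₂ * q,
      by linear_combination -hf + (u * p + u' * q) * hh⟩)).resolve_left hu_notMem
  obtain ⟨m, hm⟩ := Ideal.mem_span_singleton'.1 hdiff
  exact Submodule.mem_span_triple.2 ⟨h₂, h₁, m, by linear_combination hm⟩

theorem isPrime_span_det_two (h : [u, u', w, w'].Nodup) :
    (Ideal.span {X u * X w' - X u' * X w} : Ideal (MvPolynomial τ R)).IsPrime := by
  classical
  simp only [List.nodup_cons, List.mem_cons, not_or, List.not_mem_nil, not_false_eq_true] at h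
  have hX {s : τ} (hs : s ≠ u) : (X s : MvPolynomial τ R) ∈ supported R {u}ᶜ :=
    Algebra.subset_adjoin ⟨s, hs, rfl⟩
  have hw' := isPrime_span_X_image (R := R) {w'}
  rw [Finset.coe_singleton, Set.image_singleton, ← insert_empty_eq] at hw'
  have hdet : X u * X w' - X u' * X w = X w' * X u + -(X u' * X w : MvPolynomial τ R) := by ring
  rw [hdet, ← insert_empty_eq]
  refine isPrime_span_insert_linear (Set.empty_subset _) ?_ hw' (hX ?_)
    (neg_mem (mul_mem (hX ?_) (hX ?_))) ?_ ?_
  · rw [Ideal.span_empty]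
    exact Ideal.isPrime_bot
  any_goals grind
  · exact notMem_span_of_map (eval (Set.indicator {w'} 1)) (by simp) (by simp)
  · exact notMem_span_of_map (eval (Set.indicator {u', w} 1)) (by grind [eval_indicator_one_X])
      (by simp)

theorem isPrime_span_mulVec_det (h : [u, u', w, w', p, q].Nodup) :
    (Ideal.span {X u * X p + X u' * X q, X w * X p + X w' * X q, X u * X w' - X u' * X w} :
      Ideal (MvPolynomial τ R)).IsPrime := by
  classical
  have huu' := isPrime_span_X_image (R := R) {u, u'}
  have huw := isPrime_span_X_image (R := R) {u, w}
  simp only [Finset.coe_insert, Finset.coe_singleton, Set.image_pair] at huu' huw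
  have hdet := isPrime_span_det_two (R := R) (h.sublist (l₁ := [u, u', w, w']) (by simp))
  simp only [List.nodup_cons, List.mem_cons, not_or, List.not_mem_nil, not_false_eq_true] at h
  have hw_notMem : X w * X p + X w' * X q ∉ Ideal.span {(X u : MvPolynomial τ R), X u'} :=
    notMem_span_of_map (eval (Set.indicator {w, p} 1)) (by grind [eval_indicator_one_X])
      (by simp [h, eq_comm])
  have hu'_notMem : X u' * X q ∉ Ideal.span {(X u : MvPolynomial τ R), X w} :=
    notMem_span_of_map (eval (Set.indicator {u', q} 1)) (by grind [eval_indicator_one_X])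
      (by simp)
  have hu_notMem : (X u : MvPolynomial τ R) ∉ Ideal.span {X u * X w' - X u' * X w} :=
    notMem_span_of_map (eval (Set.indicator {u} 1)) (by grind [eval_indicator_one_X]) (by simp)
  have hX {s : τ} (hs : s ≠ p) : (X s : MvPolynomial τ R) ∈ supported R {p}ᶜ :=
    Algebra.subset_adjoin ⟨s, hs, rfl⟩
  rw [Set.insert_comm]
  refine isPrime_of_linear_saturated (t := p) (a := X u) (b := X u' * X q)
    (Set.singleton_subset_iff.2 ?_) hdet (hX ?_) (mul_mem (hX ?_) (hX ?_)) hu_notMem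
    (Ideal.span_mono (Set.subset_insert _ _)) (fun j hj => ?_)
    fun f hf => mem_span_mulVec_det_of_mul_mem huu' huw hdet hw_notMem hu'_notMem hu_notMem hf
  · exact sub_mem (mul_mem (hX (by grind)) (hX (by grind)))
      (mul_mem (hX (by grind)) (hX (by grind)))
  any_goals grind
  obtain ⟨k, i, hi, rfl⟩ := Ideal.mem_span_insert.1 hj
  have hw : X u * (X w * X p + X w' * X q) ∈ Ideal.span
      {X u * X p + X u' * X q, (X u * X w' - X u' * X w : MvPolynomial τ R)} :=
    Ideal.mem_span_pair.2 ⟨X w, X q, by ring⟩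
  rw [mul_add, mul_left_comm]
  exact add_mem (Ideal.mul_mem_left _ _ hw) (Ideal.mul_mem_left _ _ hi)

end VanishingProduct

section Path

variable {ι κ R : Type*} [CommRing R]

/-- The part `∑_{c ∈ s} y_{vc} y_{wc}` of the LSS generator of the edge `{v, w}` supported on the
columns in `s`; the generator itself is the case `s = Finset.univ`. -/
noncomputable def edgeForm (R : Type*) [CommRing R] (s : Finset κ) (v w : ι) :
    MvPolynomial (ι × κ) R :=
  ∑ c ∈ s, X (v, c) * X (w, c)

/-- The LSS generators of the edges of a path through the vertices `v 0, …, v m`. -/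
def pathForms [Fintype κ] (R : Type*) [CommRing R] {m : ℕ} (v : Fin (m + 1) → ι) :
    Set (MvPolynomial (ι × κ) R) :=
  Set.range fun k : Fin m => edgeForm R Finset.univ (v k.castSucc) (v k.succ)

theorem edgeForm_comm (s : Finset κ) (v w : ι) : edgeForm R s v w = edgeForm R s w v :=
  Finset.sum_congr rfl fun _ _ => mul_comm _ _

theorem edgeForm_mem_supported {s : Finset κ} {v w : ι} {A : Set (ι × κ)}
    (hv : ∀ c ∈ s, (v, c) ∈ A) (hw : ∀ c ∈ s, (w, c) ∈ A) : edgeForm R s v w ∈ supported R A :=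
  sum_mem fun c hc => mul_mem (Algebra.subset_adjoin ⟨_, hv c hc, rfl⟩)
    (Algebra.subset_adjoin ⟨_, hw c hc, rfl⟩)

theorem eval_indicator_edgeForm {s : Finset κ} {v w : ι} {A : Set (ι × κ)}
    (hA : ∀ c ∈ s, (v, c) ∈ A → (w, c) ∉ A) : eval (A.indicator 1) (edgeForm R s v w) = 0 := by
  classical
  rw [edgeForm, map_sum]
  refine Finset.sum_eq_zero fun c hc => ?_
  rw [map_mul, eval_indicator_one_X, eval_indicator_one_X]
  grind

theorem eval_indicator_singleton_edgeForm (s : Finset κ) {v w : ι} (hvw : v ≠ w) (x : ι × κ) :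
    eval (Set.indicator {x} 1) (edgeForm R s v w) = 0 :=
  eval_indicator_edgeForm fun _ _ hv hw =>
    hvw ((congrArg Prod.fst hv).trans (congrArg Prod.fst hw).symm)

theorem eval_indicator_pair_edgeForm {s : Finset κ} {q : κ} (hq : q ∈ s) (v w : ι) :
    eval (Set.indicator {(v, q), (w, q)} 1) (edgeForm R s v w) = 1 := by
  classical
  rw [edgeForm, map_sum, Finset.sum_eq_single_of_mem q hq fun c _ hc => by simp [hc]]
  simp

theorem pathForms_subset_supported [Fintype κ] {m : ℕ} {v : Fin (m + 1) → ι} {x : ι × κ}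
    (hx : ∀ k, v k ≠ x.1) : pathForms R v ⊆ (supported R {x}ᶜ : Set (MvPolynomial (ι × κ) R)) := by
  rintro _ ⟨k, rfl⟩
  exact edgeForm_mem_supported (fun _ _ h => hx _ (congrArg Prod.fst h))
    fun _ _ h => hx _ (congrArg Prod.fst h)

theorem pathForms_succ [Fintype κ] {m : ℕ} (v : Fin (m + 2) → ι) :
    pathForms R v = insert (edgeForm R (Finset.univ : Finset κ) (v 0) (v 1))
      (pathForms R (Fin.tail v)) := by
  rw [pathForms, Fin.range_fin_succ]
  rfl

theorem eval_congr_of_mem_supported {τ : Type*} {A : Set τ} {f : MvPolynomial τ R}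
    (hf : f ∈ supported R A) {x y : τ → R} (hxy : ∀ t ∈ A, x t = y t) : eval x f = eval y f :=
  eval₂Hom_congr' rfl (fun t ht _ => hxy t (mem_supported.1 hf ht)) rfl

variable {G : Set (MvPolynomial (ι × κ) R)} {p q : κ}

/-- The path `v` can be attached to the equations `G` at its initial vertex `v 0`: the equations
leave the variable `y_{v 0, p}` and all variables at later vertices free, and they vanish at the
coordinate points of the path. -/
structure IsAttachable {m : ℕ} (G : Set (MvPolynomial (ι × κ) R)) (v : Fin (m + 1) → ι) (p : κ) :
    Prop where
  injective : Function.Injective v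
  free_zero : G ⊆ supported R {(v 0, p)}ᶜ
  free_succ : ∀ (k : Fin m) (c : κ), G ⊆ supported R {(v k.succ, c)}ᶜ
  eval_eq_zero : ∀ k c, ∀ g ∈ G, eval (Set.indicator {(v k, c)} 1) g = 0

theorem IsAttachable.union_pathForms [Fintype κ] {l m : ℕ} {v : Fin (l + 1) → ι}
    {w : Fin (m + 1) → ι} (hw : IsAttachable G w p) (hv : Function.Injective v)
    (hvw : ∀ j k, v j ≠ w k) : IsAttachable (G ∪ pathForms R v) w p where
  injective := hw.injective
  free_zero := Set.union_subset hw.free_zero (pathForms_subset_supported fun j => hvw j 0)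
  free_succ k c := Set.union_subset (hw.free_succ k c)
    (pathForms_subset_supported fun j => hvw j k.succ)
  eval_eq_zero k c := by
    rintro g (hg | ⟨j, rfl⟩)
    · exact hw.eval_eq_zero k c g hg
    · exact eval_indicator_singleton_edgeForm _ (hv.ne Fin.castSucc_lt_succ.ne) _

variable [Nontrivial R]

theorem isPrime_span_insert_edgeForm {s : Finset κ} {v w : ι} (hvw : v ≠ w) (hp : p ∈ s)
    (hq : q ∈ s) (hqp : q ≠ p) (hG : G ⊆ supported R {(w, p)}ᶜ) (hprime : (Ideal.span G).IsPrime)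
    (hprime' : (Ideal.span (insert (X (v, p)) G)).IsPrime)
    (hGp : ∀ g ∈ G, eval (Set.indicator {(v, p)} 1) g = 0)
    (hGq : ∀ g ∈ G, eval (Set.indicator {(v, q), (w, q)} 1) g = 0) :
    (Ideal.span (insert (edgeForm R s v w) G)).IsPrime := by
  classical
  have hs : edgeForm R s v w = X (v, p) * X (w, p) + edgeForm R (s.erase p) v w :=
    (Finset.add_sum_erase s _ hp).symm
  rw [hs]
  refine isPrime_span_insert_linear hG hprime hprime' ?_ (edgeForm_mem_supported ?_ ?_)
    (notMem_span_of_map (eval (Set.indicator {(v, p)} 1)) hGp (by simp)) ?_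
  · exact Algebra.subset_adjoin ⟨(v, p), by simpa using hvw, rfl⟩
  · simpa using fun _ h _ _ => h
  · simpa using fun _ h _ => h
  · refine notMem_span_of_map (eval (Set.indicator {(v, q), (w, q)} 1)) ?_ ?_
    · exact Set.forall_mem_insert.2 ⟨by simp [hqp.symm], hGq⟩
    · rw [eval_indicator_pair_edgeForm (Finset.mem_erase.2 ⟨hqp, hq⟩)]
      exact one_ne_zero

theorem span_insert_add_mul {S : Type*} [CommRing S] (x y z : S) (G : Set S) :
    Ideal.span (insert x (insert (y * x + z) G)) = Ideal.span (insert z (insert x G)) := by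
  have h (a : S) : Ideal.span (insert x (insert a G)) = Ideal.span {x, a} ⊔ Ideal.span G := by
    rw [← Ideal.span_union, Set.insert_union, Set.singleton_union]
  rw [Set.insert_comm z, h, h, add_comm, Ideal.span_pair_add_mul_left]

theorem isPrime_span_insert_X_edgeForm [Fintype κ] {r : κ} {v w : ι} (hvw : v ≠ w) (hqp : q ≠ p)
    (hrp : r ≠ p) (hqr : q ≠ r) (hG : ∀ c : κ, G ⊆ supported R {(w, c)}ᶜ)
    (hprime : (Ideal.span G).IsPrime) (hprime' : (Ideal.span (insert (X (v, p)) G)).IsPrime)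
    (hGp : ∀ g ∈ G, eval (Set.indicator {(v, p)} 1) g = 0)
    (hGq : ∀ g ∈ G, eval (Set.indicator {(v, q), (w, q)} 1) g = 0) :
    (Ideal.span (insert (X (w, r)) (insert (edgeForm R Finset.univ v w) G))).IsPrime := by
  classical
  have hX {x : ι × κ} {c : κ} (hx : x ≠ (w, c)) : X x ∈ supported R {(w, c)}ᶜ :=
    Algebra.subset_adjoin ⟨x, hx, rfl⟩
  have hsum : edgeForm R Finset.univ v w =
      X (v, r) * X (w, r) + edgeForm R (Finset.univ.erase r) v w :=
    (Finset.add_sum_erase _ _ (Finset.mem_univ r)).symm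
  rw [hsum, span_insert_add_mul]
  refine isPrime_span_insert_edgeForm (p := p) (q := q) hvw (by simpa using hrp.symm)
    (by simpa using hqr) hqp (Set.insert_subset (hX (by simpa using hrp)) (hG p))
    (isPrime_span_insert_X (hG r) hprime) ?_ ?_ ?_
  · rw [Set.insert_comm]
    exact isPrime_span_insert_X (Set.insert_subset (hX (by simp [hvw])) (hG r)) hprime'
  · exact Set.forall_mem_insert.2 ⟨by simp [hvw.symm], hGp⟩
  · exact Set.forall_mem_insert.2 ⟨by simp [hvw.symm, hqr.symm], hGq⟩

theorem isPrime_span_union_pathForms [Fintype κ] (hκ : 2 < Fintype.card κ) {m : ℕ}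
    {v : Fin (m + 1) → ι} (hv : Function.Injective v) (hG : (Ideal.span G).IsPrime)
    (hGp : (Ideal.span (insert (X (v 0, p)) G)).IsPrime)
    (hfree : ∀ (k : Fin m) (c : κ), G ⊆ supported R {(v k.succ, c)}ᶜ)
    (hvanish : ∀ k c, ∀ g ∈ G, eval (Set.indicator {(v k, c)} 1) g = 0) :
    (Ideal.span (G ∪ pathForms R v)).IsPrime := by
  classical
  induction m generalizing G p with
  | zero => simpa [pathForms] using hG
  | succ m ih =>
    have hv01 : v 0 ≠ v 1 := hv.ne (by simp)
    obtain ⟨q, hqp, r, hrp, hqr⟩ : ∃ q, q ≠ p ∧ ∃ r, r ≠ p ∧ q ≠ r := by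
      have h : 1 < (Finset.univ.erase p).card := by
        rw [Finset.card_erase_of_mem (Finset.mem_univ p), Finset.card_univ]
        omega
      simpa using Finset.one_lt_card.1 h
    have hGq : ∀ g ∈ G, eval (Set.indicator {(v 0, q), (v 1, q)} 1) g = 0 := fun g hg => by
      rw [← hvanish 0 q g hg]
      refine eval_congr_of_mem_supported (hfree 0 q hg) fun x (hx : x ≠ (v 1, q)) => ?_
      simp only [Set.indicator_apply, Set.mem_insert_iff, Set.mem_singleton_iff, hx, or_false]
    rw [pathForms_succ, Set.union_insert, ← Set.insert_union]
    refine ih (p := r) (v := Fin.tail v) (hv.comp (Fin.succ_injective _)) ?_ ?_ ?_ ?_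
    · exact isPrime_span_insert_edgeForm hv01 (Finset.mem_univ p) (Finset.mem_univ q) hqp
        (hfree 0 p) hG hGp (hvanish 0 p) hGq
    · exact isPrime_span_insert_X_edgeForm hv01 hqp hrp hqr (hfree 0) hG hGp (hvanish 0 p) hGq
    · refine fun k c => Set.insert_subset (edgeForm_mem_supported ?_ ?_) (hfree k.succ c)
      · exact fun _ _ h => hv.ne (Fin.succ_ne_zero _).symm (congrArg Prod.fst h)
      · exact fun _ _ h => hv.ne ((Fin.succ_injective _).ne (Fin.succ_ne_zero _).symm)
          (congrArg Prod.fst h)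
    · exact fun k c => Set.forall_mem_insert.2
        ⟨eval_indicator_singleton_edgeForm _ hv01 _, hvanish k.succ c⟩

theorem IsAttachable.isPrime [Fintype κ] (hκ : 2 < Fintype.card κ) {m : ℕ}
    {v : Fin (m + 1) → ι} (hv : IsAttachable G v p) (hG : (Ideal.span G).IsPrime) :
    (Ideal.span (G ∪ pathForms R v)).IsPrime :=
  isPrime_span_union_pathForms hκ hv.injective hG (isPrime_span_insert_X hv.free_zero hG)
    hv.free_succ hv.eval_eq_zero

end Path

section Translation

variable {K : Type} [Field K] {n j : ℕ}

/-- The column `k` attached to the vertex `i`, as an index in `Fin 3`. -/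
def colIdx (i : ℕ) : Fin 3 := if Even i then 1 else 2

/-- The column `k̂` attached to the vertex `i`, as an index in `Fin 3`. -/
def hatIdx (i : ℕ) : Fin 3 := if Even i then 2 else 1

theorem colIdx_add_one (i : ℕ) : (colIdx i : ℕ) + 1 = kcol i := by
  grind [colIdx, kcol]

theorem hatIdx_add_one (i : ℕ) : (hatIdx i : ℕ) + 1 = khat i := by
  grind [hatIdx, khat]

theorem zero_ne_colIdx (i : ℕ) : 0 ≠ colIdx i := by
  grind [colIdx]

theorem zero_ne_hatIdx (i : ℕ) : 0 ≠ hatIdx i := by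
  grind [hatIdx]

theorem colIdx_ne_hatIdx (i : ℕ) : colIdx i ≠ hatIdx i := by
  grind [colIdx, hatIdx]

theorem yvar_add_one {a : ℕ} (ha : a < n) (c : Fin 3) :
    yvar K n (a + 1) (c + 1) = X (⟨a, ha⟩, c) :=
  dif_pos (by omega)

theorem yvar_kcol {a : ℕ} (ha : a < n) (i : ℕ) :
    yvar K n (a + 1) (kcol i) = X (⟨a, ha⟩, colIdx i) := by
  rw [← colIdx_add_one, yvar_add_one ha]

theorem yvar_khat {a : ℕ} (ha : a < n) (i : ℕ) :
    yvar K n (a + 1) (khat i) = X (⟨a, ha⟩, hatIdx i) := by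
  rw [← hatIdx_add_one, yvar_add_one ha]

theorem pathGen_eq_edgeForm {a : ℕ} {v w : Fin n} (hv : v + 1 = a) (hw : w = a) :
    pathGen K n a = edgeForm K Finset.univ v w := by
  subst hv
  refine Finset.sum_congr rfl fun c _ => ?_
  rw [yvar_add_one v.2, ← hw, yvar_add_one w.2]

theorem univ_eq_insert_hatIdx (i : ℕ) :
    Finset.univ = ({hatIdx i, 0, colIdx i} : Finset (Fin 3)) := by
  by_cases h : Even i <;> simp only [hatIdx, colIdx, h, if_true, if_false] <;> decide

theorem edgeForm_univ_eq_add {ι R : Type*} [CommRing R] (i : ℕ) (u v : ι) :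
    edgeForm R Finset.univ u v = X (u, hatIdx i) * X (v, hatIdx i) +
      edgeForm R {0, colIdx i} u v := by
  rw [univ_eq_insert_hatIdx i, edgeForm, edgeForm, Finset.sum_insert]
  grind [zero_ne_hatIdx, colIdx_ne_hatIdx]

/-- The vertices `j + 3, …, n` of the `n`-path, from left to right and zero-based. -/
def rightPath (hj : j + 2 < n) (k : Fin (n - (j + 3) + 1)) : Fin n := ⟨j + 2 + k, by omega⟩

/-- The vertices `j + 1, …, 1` of the `n`-path, from right to left and zero-based. -/
def leftPath (hj : j + 2 < n) (k : Fin (j + 1)) : Fin n := ⟨j - k, by omega⟩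

theorem rightPath_injective (hj : j + 2 < n) : Function.Injective (rightPath hj) := by
  intro k l h
  grind [rightPath]

theorem leftPath_injective (hj : j + 2 < n) : Function.Injective (leftPath hj) := by
  intro k l h
  grind [leftPath]

theorem exceptIdeal_eq_span (hj : j + 2 < n) : exceptIdeal K n (j + 2) =
    Ideal.span (pathForms K (rightPath hj) ∪ pathForms K (leftPath hj)) := by
  refine congrArg Ideal.span (Set.ext fun g => ⟨?_, ?_⟩)
  · rintro ⟨a, ha, han, ha₁, ha₂, rfl⟩
    rcases lt_or_ge a (j + 1) with h | h
    · refine .inr ⟨⟨j - a, by omega⟩, (edgeForm_comm _ _ _).trans (pathGen_eq_edgeForm ?_ ?_).symm⟩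
      all_goals grind [leftPath]
    · refine .inl ⟨⟨a - (j + 3), by omega⟩, (pathGen_eq_edgeForm ?_ ?_).symm⟩
      all_goals grind [rightPath]
  · rintro (⟨k, rfl⟩ | ⟨k, rfl⟩)
    · refine ⟨j + 3 + k, by omega, by omega, by omega, by omega, (pathGen_eq_edgeForm ?_ ?_).symm⟩
      all_goals grind [rightPath]
    · refine ⟨j - k, by omega, by omega, by omega, by omega,
        (edgeForm_comm _ _ _).trans (pathGen_eq_edgeForm ?_ ?_).symm⟩
      all_goals grind [leftPath]

end Translation

section Minor

variable {ι κ R : Type*} [CommRing R] {u v w : ι} {c k : κ}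

theorem edgeForm_pair [DecidableEq κ] (hck : c ≠ k) (u v : ι) :
    edgeForm R {c, k} u v = X (u, c) * X (v, c) + X (u, k) * X (v, k) :=
  Finset.sum_pair hck

/-- The entries of `Y y` and the minor `det Y`, where `Y` has the rows `(y_{uc}, y_{uk})` and
`(y_{wc}, y_{wk})` and `y` is the column vector `(y_{vc}, y_{vk})`. -/
noncomputable def minorForms [DecidableEq κ] (R : Type*) [CommRing R] (u v w : ι) (c k : κ) :
    Set (MvPolynomial (ι × κ) R) :=
  {edgeForm R {c, k} u v, edgeForm R {c, k} w v, X (u, c) * X (w, k) - X (u, k) * X (w, c)}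

theorem isPrime_span_minorForms [DecidableEq κ] [IsDomain R] (huv : u ≠ v) (hwv : w ≠ v)
    (huw : u ≠ w) (hck : c ≠ k) : (Ideal.span (minorForms R u v w c k)).IsPrime := by
  rw [minorForms, edgeForm_pair hck, edgeForm_pair hck]
  exact isPrime_span_mulVec_det (by simp [huv, hwv, huw, hck])

theorem minorForms_subset_supported [DecidableEq κ] {A : Set (ι × κ)}
    (hA : ∀ i, i = u ∨ i = v ∨ i = w → (i, c) ∈ A ∧ (i, k) ∈ A) :
    minorForms R u v w c k ⊆ (supported R A : Set (MvPolynomial (ι × κ) R)) := by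
  have hX {x : ι × κ} (hx : x ∈ A) : X x ∈ supported R A := Algebra.subset_adjoin ⟨x, hx, rfl⟩
  have hu := hA u (by simp)
  have hw := hA w (by simp)
  rintro _ (rfl | rfl | rfl)
  · exact edgeForm_mem_supported (by grind) (by grind)
  · exact edgeForm_mem_supported (by grind) (by grind)
  · exact sub_mem (mul_mem (hX hu.1) (hX hw.2)) (mul_mem (hX hu.2) (hX hw.1))

theorem eval_indicator_singleton_minorForms [DecidableEq κ] (huv : u ≠ v) (hwv : w ≠ v)
    (huw : u ≠ w) (x : ι × κ) :
    ∀ g ∈ minorForms R u v w c k, eval (Set.indicator {x} 1) g = 0 := by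
  classical
  rintro _ (rfl | rfl | rfl)
  · exact eval_indicator_singleton_edgeForm _ huv x
  · exact eval_indicator_singleton_edgeForm _ hwv x
  · simp only [map_sub, map_mul, eval_indicator_one_X]
    grind

theorem minorForms_subset_or_mem [DecidableEq κ] (hck : c ≠ k)
    {J : Ideal (MvPolynomial (ι × κ) R)} (hJ : J.IsPrime)
    (hu : edgeForm R {c, k} u v ∈ J) (hw : edgeForm R {c, k} w v ∈ J) :
    minorForms R u v w c k ⊆ J ∨ X (v, c) ∈ J ∧ X (v, k) ∈ J := by
  by_cases hdet : X (u, c) * X (w, k) - X (u, k) * X (w, c) ∈ J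
  · exact .inl (by rintro _ (rfl | rfl | rfl) <;> assumption)
  · refine .inr ⟨(hJ.mem_or_mem ?_).resolve_left hdet, (hJ.mem_or_mem ?_).resolve_left hdet⟩
    all_goals rw [edgeForm_pair hck] at hu hw
    · have h := sub_mem (J.mul_mem_left (X (w, k)) hu) (J.mul_mem_left (X (u, k)) hw)
      convert h using 1
      ring
    · have h := sub_mem (J.mul_mem_left (X (u, c)) hw) (J.mul_mem_left (X (w, c)) hu)
      convert h using 1
      ring

end Minor

section Primality

variable {K : Type} [Field K] {n j : ℕ}

theorem isPrime_span_sup_exceptIdeal (hj : j + 2 < n) {p : Fin 3}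
    {B : Set (MvPolynomial (Fin n × Fin 3) K)} (hB : (Ideal.span B).IsPrime)
    (hfree : B ⊆ supported K
      {x : Fin n × Fin 3 | x.1.1 = j + 1 ∨ (x.1.1 = j ∨ x.1.1 = j + 2) ∧ x.2 ≠ p})
    (hvanish : ∀ x : Fin n × Fin 3, x.1.1 ≠ j + 1 → ∀ g ∈ B, eval (Set.indicator {x} 1) g = 0) :
    (Ideal.span B ⊔ exceptIdeal K n (j + 2)).IsPrime := by
  have hcard : 2 < Fintype.card (Fin 3) := by simp
  have hfree' {x : Fin n × Fin 3} (hx : x.1.1 ≠ j + 1)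
      (hx' : (x.1.1 = j ∨ x.1.1 = j + 2) → x.2 = p) : B ⊆ supported K {x}ᶜ :=
    hfree.trans (supported_mono fun y hy h => by grind)
  have hright : IsAttachable B (rightPath hj) p := {
    injective := rightPath_injective hj
    free_zero := hfree' (by grind [rightPath]) fun _ => rfl
    free_succ := fun k c => hfree' (by grind [rightPath]) (by grind [rightPath])
    eval_eq_zero := fun k c => hvanish _ (by grind [rightPath]) }
  have hleft : IsAttachable B (leftPath hj) p := {
    injective := leftPath_injective hj
    free_zero := hfree' (by grind [leftPath]) fun _ => rfl
    free_succ := fun k c => hfree' (by grind [leftPath]) (by grind [leftPath])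
    eval_eq_zero := fun k c => hvanish _ (by grind [leftPath]) }
  have hdisjoint (k l) : rightPath hj k ≠ leftPath hj l := by
    grind [rightPath, leftPath]
  rw [exceptIdeal_eq_span hj, ← Ideal.span_union, ← Set.union_assoc]
  exact (hleft.union_pathForms hright.injective hdisjoint).isPrime hcard (hright.isPrime hcard hB)

theorem Pideal_eq_span (hj : j + 2 < n) : Pideal K n (j + 2) =
    Ideal.span (Set.range fun c => X (⟨j + 1, by omega⟩, c)) ⊔ exceptIdeal K n (j + 2) := by
  have hv : j + 1 < n := by omega
  rw [Pideal]
  congr 2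
  simp only [← yvar_add_one hv]
  ext g
  simp [Fin.exists_fin_succ, eq_comm]

theorem Qideal_eq_span (hj : j + 2 < n) : Qideal K n (j + 2) =
    Ideal.span (insert (X (⟨j + 1, by omega⟩, hatIdx (j + 2)))
      (minorForms K ⟨j, by omega⟩ ⟨j + 1, by omega⟩ ⟨j + 2, hj⟩ 0 (colIdx (j + 2)))) ⊔
      exceptIdeal K n (j + 2) := by
  have hy {a : ℕ} (ha : a < n) : yvar K n (a + 1) 1 = X (⟨a, ha⟩, 0) := yvar_add_one ha 0
  have hv : j + 1 < n := by omega
  have hu : j < n := by omega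
  have hu' : j + 2 - 1 = j + 1 := rfl
  rw [Qideal, hu', hy hj, hy hu, hy hv, yvar_kcol hj, yvar_kcol hu, yvar_kcol hv, yvar_khat hv,
    minorForms, edgeForm_pair (zero_ne_colIdx _), edgeForm_pair (zero_ne_colIdx _)]
  congr 2
  grind

theorem isPrime_Pideal (hj : j + 2 < n) : (Pideal K n (j + 2)).IsPrime := by
  classical
  have hB := isPrime_span_X_image (R := K)
    (Finset.univ.image (Prod.mk (⟨j + 1, by omega⟩ : Fin n) : Fin 3 → Fin n × Fin 3))
  rw [Finset.coe_image, Finset.coe_univ, Set.image_univ, ← Set.range_comp] at hB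
  rw [Pideal_eq_span hj]
  refine isPrime_span_sup_exceptIdeal hj (p := 0) hB ?_ ?_
  · rintro _ ⟨c, rfl⟩
    exact Algebra.subset_adjoin ⟨(_, c), .inl rfl, rfl⟩
  · rintro x hx _ ⟨c, rfl⟩
    grind [eval_indicator_one_X]

theorem isPrime_Qideal (hj : j + 2 < n) : (Qideal K n (j + 2)).IsPrime := by
  classical
  have hk := zero_ne_colIdx (j + 2)
  have hk' := colIdx_ne_hatIdx (j + 2)
  have h0 := zero_ne_hatIdx (j + 2)
  rw [Qideal_eq_span hj]
  refine isPrime_span_sup_exceptIdeal hj (p := hatIdx (j + 2)) (isPrime_span_insert_X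
    (minorForms_subset_supported ?_) (isPrime_span_minorForms ?_ ?_ ?_ hk)) ?_ ?_
  any_goals grind
  · refine Set.insert_subset (Algebra.subset_adjoin ⟨_, .inl rfl, rfl⟩)
      (minorForms_subset_supported ?_)
    grind
  · refine fun x hx => Set.forall_mem_insert.2
      ⟨?_, eval_indicator_singleton_minorForms (by simp) (by simp) (by simp) x⟩
    grind [eval_indicator_one_X]

end Primality

section Membership

variable {K : Type} [Field K] {n j : ℕ}

theorem notMem_span_sup_exceptIdeal {i : ℕ} {B : Set (MvPolynomial (Fin n × Fin 3) K)}
    {A : Set (Fin n × Fin 3)} {f : MvPolynomial (Fin n × Fin 3) K}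
    (hA : ∀ v w : Fin n, v.1 + 1 = w → ∀ c, (v, c) ∈ A → (w, c) ∉ A)
    (hB : ∀ g ∈ B, eval (A.indicator 1) g = 0) (hf : eval (A.indicator 1) f ≠ 0) :
    f ∉ Ideal.span B ⊔ exceptIdeal K n i := by
  rw [exceptIdeal, ← Ideal.span_union]
  refine notMem_span_of_map (eval (A.indicator 1)) ?_ hf
  rintro g (hg | ⟨a, ha, han, -, -, rfl⟩)
  · exact hB g hg
  · let v : Fin n := ⟨a - 1, by omega⟩
    let w : Fin n := ⟨a, by omega⟩
    have hvw : v.1 + 1 = w := Nat.sub_add_cancel ha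
    rw [pathGen_eq_edgeForm hvw rfl]
    exact eval_indicator_edgeForm fun c _ => hA v w hvw c

theorem X_mem_Pideal_iff (hj : j + 2 < n) {x : Fin n × Fin 3} :
    X x ∈ Pideal K n (j + 2) ↔ x.1.1 = j + 1 := by
  classical
  rw [Pideal_eq_span hj]
  constructor
  · contrapose!
    intro hx
    refine notMem_span_sup_exceptIdeal (A := {x}) (by grind) ?_ ?_
    · rintro _ ⟨c, rfl⟩
      grind [eval_indicator_one_X]
    · simp
  · exact fun hx => Ideal.mem_sup_left (Ideal.subset_span ⟨x.2, by grind⟩)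

theorem X_mem_Qideal_iff (hj : j + 2 < n) {x : Fin n × Fin 3} :
    X x ∈ Qideal K n (j + 2) ↔ x = (⟨j + 1, by omega⟩, hatIdx (j + 2)) := by
  classical
  rw [Qideal_eq_span hj]
  constructor
  · contrapose!
    intro hx
    refine notMem_span_sup_exceptIdeal (A := {x}) (by grind) (Set.forall_mem_insert.2
      ⟨?_, eval_indicator_singleton_minorForms (by simp) (by simp) (by simp) x⟩) ?_
    · grind [eval_indicator_one_X]
    · simp
  · rintro rfl
    exact Ideal.mem_sup_left (Ideal.subset_span (.inl rfl))

theorem minorForms_subset_Qideal (hj : j + 2 < n) : minorForms K (⟨j, by omega⟩ : Fin n)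
    ⟨j + 1, by omega⟩ ⟨j + 2, hj⟩ 0 (colIdx (j + 2)) ⊆ Qideal K n (j + 2) := by
  rw [Qideal_eq_span hj]
  exact fun g hg => Ideal.mem_sup_left (Ideal.subset_span (.inr hg))

theorem not_Qideal_le_Pideal (hj : j + 2 < n) : ¬Qideal K n (j + 2) ≤ Pideal K n (j + 2) := by
  classical
  intro hle
  have hdet := hle (minorForms_subset_Qideal hj (.inr (.inr rfl)))
  rw [Pideal_eq_span hj] at hdet
  have hk := zero_ne_colIdx (j + 2)
  refine notMem_span_sup_exceptIdeal
    (A := {(⟨j, by omega⟩, 0), (⟨j + 2, hj⟩, colIdx (j + 2))}) ?_ ?_ ?_ hdet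
  · grind
  · rintro _ ⟨c, rfl⟩
    simp
  · simp [hk]

end Membership

section Cover

variable {K : Type} [Field K] {n j : ℕ}

theorem pathLSS_eq_span_pair_sup (hj : j + 2 < n) : pathLSS K n =
    Ideal.span {edgeForm K Finset.univ ⟨j, by omega⟩ ⟨j + 1, by omega⟩,
      edgeForm K Finset.univ ⟨j + 2, hj⟩ ⟨j + 1, by omega⟩} ⊔ exceptIdeal K n (j + 2) := by
  rw [edgeForm_comm _ (⟨j + 2, hj⟩ : Fin n), ← pathGen_eq_edgeForm (a := j + 1) rfl rfl,
    ← pathGen_eq_edgeForm (a := j + 2) rfl rfl, exceptIdeal, ← Ideal.span_union]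
  refine congrArg Ideal.span (Set.ext fun g => ⟨?_, ?_⟩)
  · rintro ⟨a, ha, han, rfl⟩
    by_cases h₁ : a = j + 1
    · exact .inl (.inl (h₁ ▸ rfl))
    by_cases h₂ : a = j + 2
    · exact .inl (.inr (h₂ ▸ rfl))
    · exact .inr ⟨a, ha, han, h₁, h₂, rfl⟩
  · rintro ((rfl | rfl) | ⟨a, ha, han, -, -, rfl⟩)
    · exact ⟨j + 1, by omega, by omega, rfl⟩
    · exact ⟨j + 2, by omega, by omega, rfl⟩
    · exact ⟨a, ha, han, rfl⟩

theorem pathProd_mem_of_X_mem {J : Ideal (MvPolynomial (Fin n × Fin 3) K)} (hj : j + 2 < n)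
    (h : X (⟨j + 1, by omega⟩, hatIdx (j + 2)) ∈ J) : pathProd K n ∈ J := by
  rw [← yvar_khat (by omega : j + 1 < n)] at h
  exact J.mem_of_dvd (Finset.dvd_prod_of_mem _ (by grind)) h

theorem exists_X_mem_of_pathProd_mem {J : Ideal (MvPolynomial (Fin n × Fin 3) K)} (hJ : J.IsPrime)
    (h : pathProd K n ∈ J) :
    ∃ (j : ℕ) (hj : j + 2 < n), X (⟨j + 1, by omega⟩, hatIdx (j + 2)) ∈ J := by
  obtain ⟨i, hi, h⟩ := hJ.prod_mem_iff.1 h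
  obtain ⟨h2, hin⟩ := Finset.mem_Icc.1 hi
  obtain ⟨j, rfl⟩ := Nat.exists_eq_add_of_le' h2
  exact ⟨j, by omega, by rwa [← yvar_khat]⟩

theorem span_pathProd_sup_pathLSS_le_Pideal (hj : j + 2 < n) :
    Ideal.span {pathProd K n} ⊔ pathLSS K n ≤ Pideal K n (j + 2) := by
  refine sup_le ?_ ?_
  · rw [Ideal.span_singleton_le_iff_mem]
    exact pathProd_mem_of_X_mem hj ((X_mem_Pideal_iff hj).2 rfl)
  · have hmem (u : Fin n) : edgeForm K Finset.univ u ⟨j + 1, by omega⟩ ∈ Pideal K n (j + 2) :=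
      sum_mem fun c _ => Ideal.mul_mem_left _ _ ((X_mem_Pideal_iff hj).2 rfl)
    rw [pathLSS_eq_span_pair_sup hj]
    exact sup_le (Ideal.span_le.2 (Set.pair_subset (hmem _) (hmem _))) le_sup_right

theorem span_pathProd_sup_pathLSS_le_Qideal (hj : j + 2 < n) :
    Ideal.span {pathProd K n} ⊔ pathLSS K n ≤ Qideal K n (j + 2) := by
  refine sup_le ?_ ?_
  · rw [Ideal.span_singleton_le_iff_mem]
    exact pathProd_mem_of_X_mem hj ((X_mem_Qideal_iff hj).2 rfl)
  · have hminor := minorForms_subset_Qideal (K := K) hj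
    have hmem {u : Fin n} (hu : edgeForm K {0, colIdx (j + 2)} u ⟨j + 1, by omega⟩ ∈
        Qideal K n (j + 2)) : edgeForm K Finset.univ u ⟨j + 1, by omega⟩ ∈ Qideal K n (j + 2) := by
      rw [edgeForm_univ_eq_add (j + 2)]
      exact add_mem (Ideal.mul_mem_left _ _ ((X_mem_Qideal_iff hj).2 rfl)) hu
    rw [pathLSS_eq_span_pair_sup hj]
    exact sup_le (Ideal.span_le.2 (Set.pair_subset (hmem (hminor (.inl rfl)))
      (hmem (hminor (.inr (.inl rfl)))))) le_sup_right

theorem exists_Pideal_le_or_Qideal_le {J : Ideal (MvPolynomial (Fin n × Fin 3) K)} (hJ : J.IsPrime)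
    (hLSS : pathLSS K n ≤ J) (hprod : pathProd K n ∈ J) :
    ∃ j, j + 2 < n ∧ (Pideal K n (j + 2) ≤ J ∨ Qideal K n (j + 2) ≤ J) := by
  obtain ⟨j, hj, hhat⟩ := exists_X_mem_of_pathProd_mem hJ hprod
  have hpair {u : Fin n} (hu : edgeForm K Finset.univ u ⟨j + 1, by omega⟩ ∈ J) :
      edgeForm K {0, colIdx (j + 2)} u ⟨j + 1, by omega⟩ ∈ J := by
    rw [edgeForm_univ_eq_add (j + 2)] at hu
    exact (J.add_mem_iff_right (J.mul_mem_left _ hhat)).1 hu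
  rw [pathLSS_eq_span_pair_sup hj, sup_le_iff, Ideal.span_le, Set.pair_subset_iff] at hLSS
  refine ⟨j, hj, ?_⟩
  rcases minorForms_subset_or_mem (zero_ne_colIdx _) hJ (hpair hLSS.1.1) (hpair hLSS.1.2) with
    hminor | ⟨h0, hk⟩
  · right
    rw [Qideal_eq_span hj]
    exact sup_le (Ideal.span_le.2 (Set.insert_subset hhat hminor)) hLSS.2
  · left
    rw [Pideal_eq_span hj]
    refine sup_le (Ideal.span_le.2 (Set.range_subset_iff.2 fun c => ?_)) hLSS.2
    have hc : c ∈ ({hatIdx (j + 2), 0, colIdx (j + 2)} : Finset (Fin 3)) :=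
      univ_eq_insert_hatIdx (j + 2) ▸ Finset.mem_univ c
    simp only [Finset.mem_insert, Finset.mem_singleton] at hc
    rcases hc with rfl | rfl | rfl <;> assumption

end Cover

section MinimalPrimes

theorem minimalPrimes_eq_of_isAntichain {R : Type*} [CommSemiring R] {I : Ideal R}
    {S : Set (Ideal R)} (hS : IsAntichain (· ≤ ·) S) (hprime : ∀ P ∈ S, P.IsPrime)
    (hle : ∀ P ∈ S, I ≤ P) (hcover : ∀ J : Ideal R, J.IsPrime → I ≤ J → ∃ P ∈ S, P ≤ J) :
    I.minimalPrimes = S := by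
  ext J
  constructor
  · rintro ⟨⟨hJ, hIJ⟩, hmin⟩
    obtain ⟨P, hP, hPJ⟩ := hcover J hJ hIJ
    rwa [← hPJ.antisymm (hmin ⟨hprime P hP, hle P hP⟩ hPJ)]
  · refine fun hJ => ⟨⟨hprime J hJ, hle J hJ⟩, fun Q ⟨hQ, hIQ⟩ hQJ => ?_⟩
    obtain ⟨P, hP, hPQ⟩ := hcover Q hQ hIQ
    rwa [← hS.eq hP hJ (hPQ.trans hQJ)]

/-- The set `{P_2, …, P_{n-1}, Q_2, …, Q_{n-1}}` of ideals of `S`. -/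
def pathPrimes (K : Type) [Field K] (n : ℕ) : Set (Ideal (MvPolynomial (Fin n × Fin 3) K)) :=
  {J | ∃ i, 2 ≤ i ∧ i + 1 ≤ n ∧ (J = Pideal K n i ∨ J = Qideal K n i)}

variable {K : Type} [Field K] {n : ℕ}

theorem mem_pathPrimes {J : Ideal (MvPolynomial (Fin n × Fin 3) K)} : J ∈ pathPrimes K n ↔
    ∃ j, j + 2 < n ∧ (J = Pideal K n (j + 2) ∨ J = Qideal K n (j + 2)) := by
  constructor
  · rintro ⟨i, hi, hin, h⟩
    obtain ⟨j, rfl⟩ := Nat.exists_eq_add_of_le' hi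
    exact ⟨j, hin, h⟩
  · rintro ⟨j, hj, h⟩
    exact ⟨j + 2, by omega, hj, h⟩

theorem isAntichain_pathPrimes : IsAntichain (· ≤ ·) (pathPrimes K n) := by
  intro J hJ J' hJ' hne hle
  have hX {j : ℕ} (hj : j + 2 < n) : X (⟨j + 1, by omega⟩, 0) ∈ Pideal K n (j + 2) :=
    (X_mem_Pideal_iff hj).2 rfl
  obtain ⟨j, hj, h⟩ := mem_pathPrimes.1 hJ
  obtain ⟨l, hl, h'⟩ := mem_pathPrimes.1 hJ'
  rcases h with rfl | rfl <;> rcases h' with rfl | rfl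
  · have h := (X_mem_Pideal_iff hl).1 (hle (hX hj))
    obtain rfl : j = l := Nat.succ_injective h
    exact hne rfl
  · have h := (X_mem_Qideal_iff hl).1 (hle (hX hj))
    exact zero_ne_hatIdx _ (congrArg Prod.snd h)
  · have h := (X_mem_Pideal_iff hl).1 (hle ((X_mem_Qideal_iff hj).2 rfl))
    obtain rfl : j = l := Nat.succ_injective h
    exact not_Qideal_le_Pideal hj hle
  · have h := (X_mem_Qideal_iff hl).1 (hle ((X_mem_Qideal_iff hj).2 rfl))
    obtain rfl : j = l := by grind
    exact hne rfl

theorem minimalPrimes_span_pathProd_sup_pathLSS :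
    (Ideal.span {pathProd K n} ⊔ pathLSS K n).minimalPrimes = pathPrimes K n := by
  refine minimalPrimes_eq_of_isAntichain isAntichain_pathPrimes ?_ ?_ ?_
  · intro J hJ
    obtain ⟨j, hj, rfl | rfl⟩ := mem_pathPrimes.1 hJ
    · exact isPrime_Pideal hj
    · exact isPrime_Qideal hj
  · intro J hJ
    obtain ⟨j, hj, rfl | rfl⟩ := mem_pathPrimes.1 hJ
    · exact span_pathProd_sup_pathLSS_le_Pideal hj
    · exact span_pathProd_sup_pathLSS_le_Qideal hj
  · intro J hJ hle
    rw [sup_le_iff, Ideal.span_singleton_le_iff_mem] at hle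
    obtain ⟨j, hj, h | h⟩ := exists_Pideal_le_or_Qideal_le hJ hle.2 hle.1
    · exact ⟨_, mem_pathPrimes.2 ⟨j, hj, .inl rfl⟩, h⟩
    · exact ⟨_, mem_pathPrimes.2 ⟨j, hj, .inr rfl⟩, h⟩

end MinimalPrimes

/-- For the `n`-path graph with `n ≥ 3`, `d = 3` and `x = ∏_{i=2}^{n-1} y_{i k̂ᵢ}`:
the minimal primes of the principal ideal `(x) ⊆ R_G(3)` are exactly the images of
`P_2, …, P_{n-1}, Q_2, …, Q_{n-1}` in `R_G(3)`. -/
theorem path_minimal_primes (K : Type) [Field K] (n : ℕ) (hn : 3 ≤ n) :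
    (Ideal.span {Ideal.Quotient.mk (pathLSS K n) (pathProd K n)}).minimalPrimes =
      {J | ∃ i : ℕ, 2 ≤ i ∧ i + 1 ≤ n ∧
        (J = Ideal.map (Ideal.Quotient.mk (pathLSS K n)) (Pideal K n i) ∨
         J = Ideal.map (Ideal.Quotient.mk (pathLSS K n)) (Qideal K n i))} := by
  rw [← Set.image_singleton, ← Ideal.map_span,
    Ideal.minimalPrimes_map_of_surjective Ideal.Quotient.mk_surjective, Ideal.mk_ker,
    minimalPrimes_span_pathProd_sup_pathLSS]
  ext J
  constructor
  · rintro ⟨_, ⟨i, hi, hin, rfl | rfl⟩, rfl⟩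
    · exact ⟨i, hi, hin, .inl rfl⟩
    · exact ⟨i, hi, hin, .inr rfl⟩
  · rintro ⟨i, hi, hin, rfl | rfl⟩
    · exact ⟨_, ⟨i, hi, hin, .inl rfl⟩, rfl⟩
    · exact ⟨_, ⟨i, hi, hin, .inr rfl⟩, rfl⟩
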